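/- For every complex number s with Im s > 0, the function P(z) = i z²/2 − (z/π)·Log(1 + e^{2πiz}) + (i/(2π²))·Li₂(−e^{2πiz}) has complex derivative at s equal to s·tan(πs); that is, P is differentiable at s with P′(s) = s·tan(πs). -/

import Mathlib

open Complex Real

/-- The dilogarithm, defined by its power series `∑ wⁿ/n²` (convergent for `|w| < 1`). -/
noncomputable def dilog (w : ℂ) : ℂ := ∑' n : ℕ, w ^ (n + 1) / ((n : ℂ) + 1) ^ 2

/-!
Write `q = exp (2πiz)`. Since `Li₂'(w) = -Log (1 - w) / w`, the function `z ↦ Li₂ (-q)` has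
derivative `-2πi Log (1 + q)`. Hence the logarithms in `P'` cancel, and what remains is
`iz - 2iz q / (1 + q) = z · i (1 - q) / (1 + q) = z tan (πz)`.
-/

section PowerSeries

variable {𝕜 F : Type*} [RCLike 𝕜] [NormedAddCommGroup F] [NormedSpace 𝕜 F] [CompleteSpace F]

theorem hasDerivAt_tsum_pow_succ_div_smul {b : ℕ → F} {r : ℝ}
    (hb : Summable fun n => r ^ n * ‖b n‖) {w : 𝕜} (hw : ‖w‖ < r) :
    HasDerivAt (fun z : 𝕜 => ∑' n : ℕ, (z ^ (n + 1) / ((n : 𝕜) + 1)) • b n)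
      (∑' n : ℕ, w ^ n • b n) w := by
  have hterm (n : ℕ) (z : 𝕜) :
      HasDerivAt (fun z : 𝕜 => (z ^ (n + 1) / ((n : 𝕜) + 1)) • b n) (z ^ n • b n) z := by
    have hpow := (hasDerivAt_pow (n + 1) z).div_const ((n : 𝕜) + 1)
    rw [Nat.cast_succ, Nat.add_sub_cancel,
      mul_div_cancel_left₀ _ (Nat.cast_add_one_ne_zero n)] at hpow
    exact hpow.smul_const (b n)
  have hbound (n : ℕ) (z : 𝕜) (hz : z ∈ Metric.ball 0 r) : ‖z ^ n • b n‖ ≤ r ^ n * ‖b n‖ := by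
    rw [norm_smul, norm_pow]
    gcongr
    exact (mem_ball_zero_iff.mp hz).le
  exact hasDerivAt_tsum_of_isPreconnected hb Metric.isOpen_ball
    (convex_ball 0 r).isPreconnected (fun n z _ => hterm n z) hbound
    (Metric.mem_ball_self ((norm_nonneg w).trans_lt hw)) (by simp) (mem_ball_zero_iff.mpr hw)

end PowerSeries

section Dilogarithm

theorem hasDerivAt_dilog_tsum {w : ℂ} (hw : ‖w‖ < 1) :
    HasDerivAt dilog (∑' n : ℕ, w ^ n / ((n : ℂ) + 1)) w := by
  obtain ⟨r, hwr, hr⟩ := exists_between hw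
  have hr0 : 0 ≤ r := (norm_nonneg w).trans hwr.le
  have hsummable : Summable fun n : ℕ => r ^ n * ‖((n : ℂ) + 1)⁻¹‖ := by
    refine (summable_geometric_of_lt_one hr0 hr).of_nonneg_of_le (fun n => by positivity)
      fun n => mul_le_of_le_one_right (pow_nonneg hr0 n) ?_
    rw [← Nat.cast_succ, norm_inv, Complex.norm_natCast]
    exact Nat.cast_inv_le_one (n + 1)
  have hderiv := hasDerivAt_tsum_pow_succ_div_smul hsummable hwr
  simp only [smul_eq_mul, ← div_eq_mul_inv, div_div, ← sq] at hderiv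
  exact hderiv

theorem hasSum_pow_div_succ_neg_log_div {w : ℂ} (hw : ‖w‖ < 1) (hw0 : w ≠ 0) :
    HasSum (fun n : ℕ => w ^ n / ((n : ℂ) + 1)) (-Complex.log (1 - w) / w) := by
  have hlog := (Complex.hasSum_taylorSeries_neg_log' hw).div_const w
  simpa only [div_right_comm _ _ w, pow_succ, mul_div_cancel_right₀ _ hw0] using hlog

theorem hasDerivAt_dilog {w : ℂ} (hw : ‖w‖ < 1) (hw0 : w ≠ 0) :
    HasDerivAt dilog (-Complex.log (1 - w) / w) w :=
  (hasSum_pow_div_succ_neg_log_div hw hw0).tsum_eq ▸ hasDerivAt_dilog_tsum hw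

end Dilogarithm

section Exponential

theorem norm_exp_lt_one_iff {z : ℂ} : ‖Complex.exp z‖ < 1 ↔ z.re < 0 := by
  rw [Complex.norm_exp, Real.exp_lt_one_iff]

theorem one_add_exp_mem_slitPlane {z : ℂ} (hz : z.re < 0) : 1 + Complex.exp z ∈ slitPlane :=
  mem_slitPlane_of_norm_lt_one (norm_exp_lt_one_iff.mpr hz)

theorem tan_eq_exp_ratio (z : ℂ) :
    Complex.tan z = I * (1 - Complex.exp (2 * I * z)) / (1 + Complex.exp (2 * I * z)) := by
  rw [← Complex.cot_inv_eq_tan, Complex.cot_eq_exp_ratio, inv_div, add_comm]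

variable {f : ℂ → ℂ} {f' s : ℂ}

theorem hasDerivAt_log_one_add_exp (hf : HasDerivAt f f' s) (hs : (f s).re < 0) :
    HasDerivAt (fun z => Complex.log (1 + Complex.exp (f z)))
      (Complex.exp (f s) * f' / (1 + Complex.exp (f s))) s :=
  (hf.cexp.const_add 1).clog (one_add_exp_mem_slitPlane hs)

theorem hasDerivAt_dilog_neg_exp (hf : HasDerivAt f f' s) (hs : (f s).re < 0) :
    HasDerivAt (fun z => dilog (-Complex.exp (f z)))
      (-Complex.log (1 + Complex.exp (f s)) * f') s := by
  have hq : ‖-Complex.exp (f s)‖ < 1 := by rwa [norm_neg, norm_exp_lt_one_iff]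
  have hq0 : -Complex.exp (f s) ≠ 0 := neg_ne_zero.mpr (Complex.exp_ne_zero _)
  have hcomp := (hasDerivAt_dilog hq hq0).comp s hf.cexp.neg
  rwa [sub_neg_eq_add, ← neg_mul, ← mul_assoc, div_mul_cancel₀ _ hq0] at hcomp

end Exponential

theorem stmt_5 (s : ℂ) (hs : 0 < s.im) :
    HasDerivAt (fun z : ℂ =>
        Complex.I * z ^ 2 / 2
          - (z / (Real.pi : ℂ)) * Complex.log (1 + Complex.exp (2 * Real.pi * Complex.I * z))
          + (Complex.I / (2 * (Real.pi : ℂ) ^ 2)) * dilog (-Complex.exp (2 * Real.pi * Complex.I * z)))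
      (s * Complex.tan (Real.pi * s)) s := by
  have hre : (2 * Real.pi * I * s).re < 0 := by simpa using by positivity
  have hlin : HasDerivAt (fun z : ℂ => 2 * Real.pi * I * z) (2 * Real.pi * I) s :=
    hasDerivAt_const_mul _
  have hquad := ((hasDerivAt_pow 2 s).const_mul I).div_const 2
  have hlog :=
    ((hasDerivAt_id' s).div_const (Real.pi : ℂ)).mul (hasDerivAt_log_one_add_exp hlin hre)
  have hdilog := (hasDerivAt_dilog_neg_exp hlin hre).const_mul (I / (2 * (Real.pi : ℂ) ^ 2))
  have htan : Complex.tan (Real.pi * s) = I * (1 - Complex.exp (2 * Real.pi * I * s)) /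
      (1 + Complex.exp (2 * Real.pi * I * s)) := by
    rw [tan_eq_exp_ratio, ← mul_assoc, mul_right_comm 2 I]
  convert! (hquad.sub hlog).add hdilog using 1
  rw [htan]
  have hq := slitPlane_ne_zero (one_add_exp_mem_slitPlane hre)
  have hpi : (Real.pi : ℂ) ≠ 0 := ofReal_ne_zero.mpr Real.pi_ne_zero
  generalize Complex.exp (2 * Real.pi * I * s) = q at *
  field_simp
  linear_combination 2 * (1 + q) * Complex.log (1 + q) * I_sq
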